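/- arXiv:2407.14475 — 4 statements merged into one kernel-verified Lean document; each statement's English description precedes it below -/
import Mathlib

section
/- Let X be a two-dimensional real Banach space, let λ ∈ (0,1), and let x, y ∈ S_X. If x is isosceles orthogonal to ((1−λ)/λ)·y, then the generalized local James constant satisfies β(λ, x) = ‖λx + (1−λ)y‖ = ‖λx − (1−λ)y‖. -/
/-
Put `u = λx` and `v = (1 - λ)y`, so that `u` is isosceles orthogonal to `v`. In a plane every `w`
with `‖w‖ = ‖v‖` lies in one of the four cones spanned by `εu` and `δv` with signs `ε`, `δ`. By the
monotonicity lemma for circles, moving along the circle from `δv` towards the ray of `εu` does not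
increase the distance to `εu`, so `‖w - εu‖ ≤ ‖δv - εu‖ = ‖u + v‖`. Hence one of `‖u + w‖`,
`‖u - w‖` is at most `‖u + v‖`.
-/

section Monotonicity

variable {X : Type*} [SeminormedAddCommGroup X] [NormedSpace ℝ X] {v q : X} {b c : ℝ}

theorem norm_add_norm_smul_add_smul_sub_le (hb : 0 ≤ b) (hc : 0 ≤ c) (hbc : 1 ≤ b + c) :
    ‖v‖ + ‖b • v + c • q - q‖ ≤ ‖b • v + c • q‖ + ‖v - q‖ := by
  -- The segments `[0, b • v + c • q]` and `[v, q]` meet, so they are the diagonals of a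
  -- quadrilateral of which `[0, v]` and `[q, b • v + c • q]` are opposite sides.
  set z := b • v + c • q with hz
  have side_zq : (b + c) * ‖z - q‖ ≤ (b + c - 1) * ‖z‖ + b * ‖v - q‖ := calc
    (b + c) * ‖z - q‖ = ‖(b + c) • (z - q)‖ := (norm_smul_of_nonneg (by linarith) _).symm
    _ = ‖(b + c - 1) • z + b • (v - q)‖ := by rw [hz]; congr 1; module
    _ ≤ ‖(b + c - 1) • z‖ + ‖b • (v - q)‖ := norm_add_le _ _
    _ = (b + c - 1) * ‖z‖ + b * ‖v - q‖ := by
      rw [norm_smul_of_nonneg (by linarith), norm_smul_of_nonneg hb]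
  have side_v : (b + c) * ‖v‖ ≤ ‖z‖ + c * ‖v - q‖ := calc
    (b + c) * ‖v‖ = ‖(b + c) • v‖ := (norm_smul_of_nonneg (by linarith) _).symm
    _ = ‖z + c • (v - q)‖ := by rw [hz]; congr 1; module
    _ ≤ ‖z‖ + ‖c • (v - q)‖ := norm_add_le _ _
    _ = ‖z‖ + c * ‖v - q‖ := by rw [norm_smul_of_nonneg hc]
  exact le_of_mul_le_mul_left (by linarith) (by linarith : 0 < b + c)

theorem norm_smul_add_smul_sub_le_of_add_le_one (hb : 0 ≤ b) (hc : 0 ≤ c) (hbc : b + c ≤ 1)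
    (hle : ‖v‖ ≤ ‖b • v + c • q‖) : ‖b • v + c • q - q‖ ≤ ‖v - q‖ := by
  have hv : (1 - b) * ‖v‖ ≤ c * ‖q‖ := by
    have := hle.trans (norm_add_le _ _)
    rw [norm_smul_of_nonneg hb, norm_smul_of_nonneg hc] at this
    linarith
  have hq : (1 - b) * ‖q‖ ≤ (1 - b) * (‖v‖ + ‖v - q‖) :=
    mul_le_mul_of_nonneg_left (norm_le_norm_add_norm_sub v q) (by linarith)
  calc ‖b • v + c • q - q‖ = ‖b • (v - q) - (1 - b - c) • q‖ := by congr 1; module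
    _ ≤ ‖b • (v - q)‖ + ‖(1 - b - c) • q‖ := norm_sub_le _ _
    _ = b * ‖v - q‖ + (1 - b - c) * ‖q‖ := by
      rw [norm_smul_of_nonneg hb, norm_smul_of_nonneg (by linarith)]
    _ ≤ ‖v - q‖ := by linarith

theorem norm_smul_add_smul_sub_le_of_norm_eq (hb : 0 ≤ b) (hc : 0 ≤ c)
    (heq : ‖b • v + c • q‖ = ‖v‖) : ‖b • v + c • q - q‖ ≤ ‖v - q‖ := by
  rcases le_total 1 (b + c) with hbc | hbc
  · have := norm_add_norm_smul_add_smul_sub_le (v := v) (q := q) hb hc hbc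
    linarith
  · exact norm_smul_add_smul_sub_le_of_add_le_one hb hc hbc heq.ge

end Monotonicity

/-- Isosceles orthogonality `x ⊥_I y` in the sense of James: `x` and `y` span a parallelogram with
diagonals of equal length. -/
def IsoscelesOrthogonal {X : Type*} [SeminormedAddCommGroup X] (x y : X) : Prop :=
  ‖x + y‖ = ‖x - y‖

namespace IsoscelesOrthogonal

section Seminormed

variable {X : Type*} [SeminormedAddCommGroup X] [NormedSpace ℝ X] {u v w : X}

theorem smul (h : IsoscelesOrthogonal u v) (a : ℝ) : IsoscelesOrthogonal (a • u) (a • v) := by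
  rw [IsoscelesOrthogonal, ← smul_add, ← smul_sub, norm_smul, norm_smul, h]

theorem min_norm_add_norm_sub_le_of_mem_span (h : IsoscelesOrthogonal u v)
    (hw : w ∈ Submodule.span ℝ {u, v}) (hnorm : ‖w‖ = ‖v‖) :
    min ‖u + w‖ ‖u - w‖ ≤ ‖u + v‖ := by
  obtain ⟨s, t, rfl⟩ := Submodule.mem_span_pair.1 hw
  wlog ht : 0 ≤ t generalizing s t
  · have hneg : (-s) • u + (-t) • v = -(s • u + t • v) := by module
    have := this (-s) (-t) (by rw [hneg]; exact neg_mem hw) (by rw [hneg, norm_neg, hnorm])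
      (by linarith)
    rwa [hneg, ← sub_eq_add_neg, sub_neg_eq_add, min_comm] at this
  rcases le_total 0 s with hs | hs
  · rw [add_comm (s • u)] at hnorm ⊢
    calc min ‖u + (t • v + s • u)‖ ‖u - (t • v + s • u)‖
        ≤ ‖u - (t • v + s • u)‖ := min_le_right _ _
      _ = ‖t • v + s • u - u‖ := norm_sub_rev _ _
      _ ≤ ‖v - u‖ := norm_smul_add_smul_sub_le_of_norm_eq ht hs hnorm
      _ = ‖u + v‖ := by rw [norm_sub_rev, h]
  · have hcone : s • u + t • v = t • v + (-s) • (-u) := by module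
    rw [hcone] at hnorm ⊢
    calc min ‖u + (t • v + (-s) • (-u))‖ ‖u - (t • v + (-s) • (-u))‖
        ≤ ‖u + (t • v + (-s) • (-u))‖ := min_le_left _ _
      _ = ‖t • v + (-s) • (-u) - (-u)‖ := by rw [sub_neg_eq_add, add_comm]
      _ ≤ ‖v - (-u)‖ := norm_smul_add_smul_sub_le_of_norm_eq ht (neg_nonneg.2 hs) hnorm
      _ = ‖u + v‖ := by rw [sub_neg_eq_add, add_comm]

end Seminormed

variable {X : Type*} [NormedAddCommGroup X] [NormedSpace ℝ X] {u v w : X}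

theorem linearIndependent (h : IsoscelesOrthogonal u v) (hu : u ≠ 0) (hv : v ≠ 0) :
    LinearIndependent ℝ ![u, v] := by
  rw [LinearIndependent.pair_iff' hu]
  rintro a rfl
  have habs : |1 + a| * ‖u‖ = |1 - a| * ‖u‖ := by
    rw [← Real.norm_eq_abs, ← Real.norm_eq_abs, ← norm_smul, ← norm_smul, add_smul, sub_smul,
      one_smul, h]
  have ha : a = 0 := by
    rcases abs_eq_abs.1 (mul_right_cancel₀ (norm_ne_zero_iff.2 hu) habs) with h | h <;> linarith
  exact hv (by rw [ha, zero_smul])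

theorem min_norm_add_norm_sub_le [FiniteDimensional ℝ X] (hdim : Module.finrank ℝ X ≤ 2)
    (h : IsoscelesOrthogonal u v) (hnorm : ‖w‖ = ‖v‖) : min ‖u + w‖ ‖u - w‖ ≤ ‖u + v‖ := by
  rcases eq_or_ne u 0 with rfl | hu
  · simp [hnorm]
  rcases eq_or_ne v 0 with rfl | hv
  · have hw : w = 0 := by rwa [norm_zero, norm_eq_zero] at hnorm
    simp [hw]
  have hli := h.linearIndependent hu hv
  have hspan : Submodule.span ℝ {u, v} = ⊤ := by
    rw [← Matrix.range_cons_cons_empty]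
    exact hli.span_eq_top_of_card_eq_finrank' (hli.fintype_card_le_finrank.antisymm (by simpa))
  exact h.min_norm_add_norm_sub_le_of_mem_span (hspan ▸ Submodule.mem_top) hnorm

end IsoscelesOrthogonal

/-- The generalized local James constant `β(λ, x)`. It is defined for an arbitrary real `λ` and an
arbitrary vector `x`, where the literature takes `λ ∈ (0, 1)` and `‖x‖ = 1`. -/
noncomputable def localJamesConstant {X : Type*} [SeminormedAddCommGroup X] [NormedSpace ℝ X]
    (lam : ℝ) (x : X) : ℝ :=
  sSup {r : ℝ | ∃ z : X, ‖z‖ = 1 ∧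
    r = min ‖lam • x + (1 - lam) • z‖ ‖lam • x - (1 - lam) • z‖}

theorem IsoscelesOrthogonal.localJamesConstant_eq {X : Type*} [NormedAddCommGroup X]
    [NormedSpace ℝ X] [FiniteDimensional ℝ X] (hdim : Module.finrank ℝ X ≤ 2) {lam : ℝ} {x y : X}
    (hy : ‖y‖ = 1) (h : IsoscelesOrthogonal (lam • x) ((1 - lam) • y)) :
    localJamesConstant lam x = ‖lam • x + (1 - lam) • y‖ := by
  refine IsGreatest.csSup_eq ⟨⟨y, hy, ?_⟩, ?_⟩
  · rw [← h, min_self]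
  · rintro _ ⟨z, hz, rfl⟩
    exact h.min_norm_add_norm_sub_le hdim (by rw [norm_smul, norm_smul, hz, hy])

theorem stmt0_general {X : Type*} [NormedAddCommGroup X] [NormedSpace ℝ X]
    [FiniteDimensional ℝ X] (hdim : Module.finrank ℝ X ≤ 2) {lam : ℝ} (hlam : lam ≠ 0) {x y : X}
    (hy : ‖y‖ = 1) (h : IsoscelesOrthogonal x (((1 - lam) / lam) • y)) :
    localJamesConstant lam x = ‖lam • x + (1 - lam) • y‖ ∧
      ‖lam • x + (1 - lam) • y‖ = ‖lam • x - (1 - lam) • y‖ := by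
  have hscaled : IsoscelesOrthogonal (lam • x) ((1 - lam) • y) := by
    simpa only [smul_smul, mul_div_cancel₀ _ hlam] using h.smul lam
  exact ⟨hscaled.localJamesConstant_eq hdim hy, hscaled⟩

/-- If `X` is a two-dimensional real Banach space, `λ ∈ (0,1)`, `x, y` are unit
vectors and `x` is isosceles orthogonal to `((1-λ)/λ) • y`, then the generalized local James
constant satisfies `β(λ, x) = ‖λx + (1-λ)y‖ = ‖λx - (1-λ)y‖`. -/
theorem stmt0 {X : Type*} [NormedAddCommGroup X] [NormedSpace ℝ X] [CompleteSpace X]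
    (hdim : Module.finrank ℝ X = 2)
    (lam : ℝ) (hlam : lam ∈ Set.Ioo (0 : ℝ) 1)
    (x y : X) (hx : ‖x‖ = 1) (hy : ‖y‖ = 1)
    (hI : ‖x + ((1 - lam) / lam) • y‖ = ‖x - ((1 - lam) / lam) • y‖) :
    sSup {r : ℝ | ∃ z : X, ‖z‖ = 1 ∧
        r = min ‖lam • x + (1 - lam) • z‖ ‖lam • x - (1 - lam) • z‖}
      = ‖lam • x + (1 - lam) • y‖ ∧
    ‖lam • x + (1 - lam) • y‖ = ‖lam • x - (1 - lam) • y‖ :=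
  have : FiniteDimensional ℝ X := .of_finrank_pos (by rw [hdim]; exact two_pos)
  stmt0_general hdim.le hlam.1.ne' hy hI
end

section
/- Let X be a two-dimensional real Banach space and let λ ∈ (0,1). Then the generalized James constant satisfies J(λ, X) = sup{‖λx + (1−λ)y‖ : x, y ∈ S_X, x ⊥_I ((1−λ)/λ)·y} = sup{‖λx − (1−λ)y‖ : x, y ∈ S_X, x ⊥_I ((1−λ)/λ)·y}. -/
section Wbtw

variable {V P : Type*} [SeminormedAddCommGroup V] [NormedSpace ℝ V] [PseudoMetricSpace P]
  [NormedAddTorsor V P]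

theorem dist_add_dist_le_of_wbtw_of_wbtw {o p q v w : P} (hov : Wbtw ℝ o q v)
    (hpw : Wbtw ℝ p q w) : dist o w + dist p v ≤ dist o v + dist p w := by
  have how : dist o w ≤ dist o q + dist q w := dist_triangle o q w
  have hpv : dist p v ≤ dist p q + dist q v := dist_triangle p q v
  linarith [hov.dist_add_dist, hpw.dist_add_dist]

end Wbtw

section Seminormed

variable {X : Type*} [SeminormedAddCommGroup X]

theorem IsoscelesOrthogonal.symm {x y : X} (h : IsoscelesOrthogonal x y) :
    IsoscelesOrthogonal y x := by
  rw [IsoscelesOrthogonal, add_comm, norm_sub_rev]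
  exact h

variable [NormedSpace ℝ X]

theorem isoscelesOrthogonal_smul_smul_iff {a : ℝ} (ha : a ≠ 0) (b : ℝ) (x y : X) :
    IsoscelesOrthogonal (a • x) (b • y) ↔ IsoscelesOrthogonal x ((b / a) • y) := by
  have hb : b • y = a • (b / a) • y := by rw [smul_smul, mul_div_cancel₀ b ha]
  rw [IsoscelesOrthogonal, hb, ← smul_add, ← smul_sub, norm_smul, norm_smul,
    mul_right_inj' (norm_ne_zero_iff.2 ha), IsoscelesOrthogonal]

-- The segments `[0, v]` and `[-u, w]` are the diagonals of a quadrilateral and meet at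
-- `(a / (c + b)) • v`, where `c • w = a • v + b • u`.
theorem norm_add_le_norm_add_of_smul_mem_segment {u v w : X} {c : ℝ} (hc : 0 ≤ c)
    (hcw : c • w ∈ segment ℝ v u) (hwv : ‖w‖ = ‖v‖) (huv : ‖u‖ ≤ ‖v‖) :
    ‖u + v‖ ≤ ‖u + w‖ := by
  obtain hv_zero | hv_pos := (norm_nonneg v).eq_or_lt
  · calc ‖u + v‖ ≤ ‖u‖ + ‖v‖ := norm_add_le u v
      _ ≤ 0 := by linarith
      _ ≤ ‖u + w‖ := norm_nonneg _
  obtain ⟨a, b, ha, hb, hab, hw⟩ := hcw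
  have hav : a • v = c • w + b • (-u) := by rw [← hw]; module
  have hacb : a ≤ c + b := by
    refine le_of_mul_le_mul_right ?_ hv_pos
    calc a * ‖v‖ = ‖c • w + b • (-u)‖ := by rw [← hav, norm_smul_of_nonneg ha]
      _ ≤ c * ‖w‖ + b * ‖u‖ := by
        simpa only [norm_smul_of_nonneg hc, norm_smul_of_nonneg hb, norm_neg]
          using norm_add_le (c • w) (b • (-u))
      _ ≤ (c + b) * ‖v‖ := by rw [hwv, add_mul]; gcongr
  have hcb : 0 < c + b := by linarith
  have hq : (a / (c + b)) • v = (c / (c + b)) • w + (b / (c + b)) • (-u) := by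
    simp only [div_eq_inv_mul, mul_smul, hav, smul_add]
  have hqv : Wbtw ℝ 0 ((a / (c + b)) • v) v :=
    ⟨a / (c + b), ⟨by positivity, div_le_one_of_le₀ hacb hcb.le⟩, by
      simp only [AffineMap.lineMap_apply_module, smul_zero, zero_add]⟩
  have hqw : Wbtw ℝ (-u) ((a / (c + b)) • v) w := by
    rw [← mem_segment_iff_wbtw, segment_symm]
    exact ⟨c / (c + b), b / (c + b), by positivity, by positivity,
      by rw [← add_div, div_self hcb.ne'], hq.symm⟩
  have hdist := dist_add_dist_le_of_wbtw_of_wbtw hqv hqw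
  simp only [dist_eq_norm_sub', sub_neg_eq_add, sub_zero, hwv, add_comm _ u] at hdist
  linarith

end Seminormed

section Normed

variable {X : Type*} [NormedAddCommGroup X] [NormedSpace ℝ X]

theorem exists_norm_eq_isoscelesOrthogonal (hX : 1 < Module.rank ℝ X) (u : X) {r : ℝ}
    (hr : 0 ≤ r) : ∃ w : X, ‖w‖ = r ∧ IsoscelesOrthogonal u w := by
  have : Nontrivial X := rank_pos_iff_nontrivial.1 (zero_lt_one.trans hX)
  obtain ⟨v, hv⟩ := exists_norm_eq X hr
  wlog hle : ‖u + v‖ ≤ ‖u - v‖ generalizing v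
  · refine this (-v) (by rwa [norm_neg]) ?_
    rw [← sub_eq_add_neg, sub_neg_eq_add]
    exact (not_le.1 hle).le
  obtain ⟨w, hw, huw⟩ := (isPreconnected_sphere hX 0 r).intermediate_value₂
    (f := fun w => ‖u + w‖) (g := fun w => ‖u - w‖) (mem_sphere_zero_iff_norm.2 hv)
    (mem_sphere_zero_iff_norm.2 ((norm_neg v).trans hv)) (by fun_prop) (by fun_prop) hle
    (by simpa only [sub_neg_eq_add, ← sub_eq_add_neg] using hle)
  exact ⟨w, mem_sphere_zero_iff_norm.1 hw, huw⟩

theorem exists_isoscelesOrthogonal_smul_mem_segment {u v : X} (h0 : 0 ∉ segment ℝ v u)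
    (hle : ‖u + v‖ ≤ ‖u - v‖) :
    ∃ w : X, ‖w‖ = ‖v‖ ∧ IsoscelesOrthogonal u w ∧ ∃ c : ℝ, 0 ≤ c ∧ c • w ∈ segment ℝ v u := by
  have hne : ∀ z ∈ segment ℝ v u, ‖z‖ ≠ 0 := fun z hz hz0 => h0 (norm_eq_zero.1 hz0 ▸ hz)
  have hv : ‖v‖ ≠ 0 := hne v (left_mem_segment ℝ v u)
  let proj : X → X := fun z => (‖v‖ / ‖z‖) • z
  have hproj : ContinuousOn proj (segment ℝ v u) :=
    (continuousOn_const.div continuousOn_id.norm hne).smul continuousOn_id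
  have hproj_v : proj v = v := by simp only [proj, div_self hv, one_smul]
  have hproj_u : ‖u - proj u‖ ≤ ‖u + proj u‖ := by
    rw [(SameRay.sameRay_nonneg_smul_right u (by positivity)).norm_add]
    exact norm_sub_le _ _
  obtain ⟨z, hz, huz⟩ := (convex_segment v u).isPreconnected.intermediate_value₂
    (f := fun z => ‖u + proj z‖) (g := fun z => ‖u - proj z‖) (left_mem_segment ℝ v u)
    (right_mem_segment ℝ v u) (by fun_prop) (by fun_prop) (by simpa only [hproj_v] using hle)
    hproj_u
  refine ⟨proj z, ?_, huz, ‖z‖ / ‖v‖, by positivity, ?_⟩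
  · rw [norm_smul_of_nonneg (by positivity), div_mul_cancel₀ _ (hne z hz)]
  · rwa [smul_smul, div_mul_div_cancel₀ hv, div_self (hne z hz), one_smul]

theorem exists_isoscelesOrthogonal_norm_add_le (hX : 1 < Module.rank ℝ X) {u v : X}
    (huv : ‖u‖ ≤ ‖v‖) (hle : ‖u + v‖ ≤ ‖u - v‖) :
    ∃ w : X, ‖w‖ = ‖v‖ ∧ IsoscelesOrthogonal u w ∧ ‖u + v‖ ≤ ‖u + w‖ := by
  obtain ⟨w, hw, huw, c, hc, hcw⟩ : ∃ w : X, ‖w‖ = ‖v‖ ∧ IsoscelesOrthogonal u w ∧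
      ∃ c : ℝ, 0 ≤ c ∧ c • w ∈ segment ℝ v u := by
    by_cases h0 : 0 ∈ segment ℝ v u
    · obtain ⟨w, hw, huw⟩ := exists_norm_eq_isoscelesOrthogonal hX u (norm_nonneg v)
      exact ⟨w, hw, huw, 0, le_rfl, by rwa [zero_smul]⟩
    · exact exists_isoscelesOrthogonal_smul_mem_segment h0 hle
  exact ⟨w, hw, huw, norm_add_le_norm_add_of_smul_mem_segment hc hcw hw huv⟩

theorem exists_isoscelesOrthogonal_min_le (hX : 1 < Module.rank ℝ X) (u v : X) :
    ∃ u' v' : X, ‖u'‖ = ‖u‖ ∧ ‖v'‖ = ‖v‖ ∧ IsoscelesOrthogonal u' v' ∧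
      min ‖u + v‖ ‖u - v‖ ≤ ‖u' + v'‖ := by
  wlog huv : ‖u‖ ≤ ‖v‖ generalizing u v
  · obtain ⟨v', u', hv', hu', horth, hmin⟩ := this v u (not_le.1 huv).le
    rw [add_comm v u, norm_sub_rev v u, add_comm v' u'] at hmin
    exact ⟨u', v', hu', hv', horth.symm, hmin⟩
  wlog hle : ‖u + v‖ ≤ ‖u - v‖ generalizing v
  · simpa only [norm_neg, sub_neg_eq_add, ← sub_eq_add_neg, min_comm] using
      this (-v) (by rwa [norm_neg])
        (by simpa only [sub_neg_eq_add, ← sub_eq_add_neg] using (not_le.1 hle).le)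
  obtain ⟨w, hw, huw, hadd⟩ := exists_isoscelesOrthogonal_norm_add_le hX huv hle
  exact ⟨u, w, rfl, hw, huw, (min_le_left _ _).trans hadd⟩

theorem exists_smul_eq_of_norm_eq_norm_smul {a : ℝ} {x u : X} (h : ‖u‖ = ‖a • x‖) :
    ∃ x' : X, ‖x'‖ = ‖x‖ ∧ a • x' = u := by
  obtain rfl | ha := eq_or_ne a 0
  · exact ⟨x, rfl, by rw [zero_smul, eq_comm, ← norm_eq_zero, h, zero_smul, norm_zero]⟩
  · refine ⟨a⁻¹ • u, ?_, smul_inv_smul₀ ha u⟩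
    rw [norm_smul, h, ← norm_smul, inv_smul_smul₀ ha]

theorem sSup_min_norm_eq_sSup_isoscelesOrthogonal (hX : 1 < Module.rank ℝ X) (a b : ℝ) :
    sSup {r : ℝ | ∃ x y : X, ‖x‖ = 1 ∧ ‖y‖ = 1 ∧ r = min ‖a • x + b • y‖ ‖a • x - b • y‖}
      = sSup {r : ℝ | ∃ x y : X, ‖x‖ = 1 ∧ ‖y‖ = 1 ∧ IsoscelesOrthogonal (a • x) (b • y) ∧
          r = ‖a • x + b • y‖} := by
  apply csSup_eq_csSup_of_forall_exists_le
  · rintro _ ⟨x, y, hx, hy, rfl⟩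
    obtain ⟨u, v, hu, hv, huv, hmin⟩ := exists_isoscelesOrthogonal_min_le hX (a • x) (b • y)
    obtain ⟨x', hx', rfl⟩ := exists_smul_eq_of_norm_eq_norm_smul hu
    obtain ⟨y', hy', rfl⟩ := exists_smul_eq_of_norm_eq_norm_smul hv
    exact ⟨_, ⟨x', y', hx'.trans hx, hy'.trans hy, huv, rfl⟩, hmin⟩
  · rintro _ ⟨x, y, hx, hy, hxy, rfl⟩
    exact ⟨_, ⟨x, y, hx, hy, rfl⟩, le_min le_rfl hxy.le⟩

end Normed

theorem stmt1_general {X : Type*} [NormedAddCommGroup X] [NormedSpace ℝ X]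
    (hX : 1 < Module.rank ℝ X) {lam : ℝ} (hlam : lam ≠ 0) :
    sSup {r : ℝ | ∃ x y : X, ‖x‖ = 1 ∧ ‖y‖ = 1 ∧
        r = min ‖lam • x + (1 - lam) • y‖ ‖lam • x - (1 - lam) • y‖}
      = sSup {r : ℝ | ∃ x y : X, ‖x‖ = 1 ∧ ‖y‖ = 1 ∧
          ‖x + ((1 - lam) / lam) • y‖ = ‖x - ((1 - lam) / lam) • y‖ ∧
          r = ‖lam • x + (1 - lam) • y‖} ∧
    sSup {r : ℝ | ∃ x y : X, ‖x‖ = 1 ∧ ‖y‖ = 1 ∧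
        r = min ‖lam • x + (1 - lam) • y‖ ‖lam • x - (1 - lam) • y‖}
      = sSup {r : ℝ | ∃ x y : X, ‖x‖ = 1 ∧ ‖y‖ = 1 ∧
          ‖x + ((1 - lam) / lam) • y‖ = ‖x - ((1 - lam) / lam) • y‖ ∧
          r = ‖lam • x - (1 - lam) • y‖} := by
  have hiso (x y : X) : ‖x + ((1 - lam) / lam) • y‖ = ‖x - ((1 - lam) / lam) • y‖ ↔
      IsoscelesOrthogonal (lam • x) ((1 - lam) • y) :=
    (isoscelesOrthogonal_smul_smul_iff hlam (1 - lam) x y).symm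
  have hsub (x y : X) (r : ℝ) :
      IsoscelesOrthogonal (lam • x) ((1 - lam) • y) ∧ r = ‖lam • x - (1 - lam) • y‖ ↔
        IsoscelesOrthogonal (lam • x) ((1 - lam) • y) ∧ r = ‖lam • x + (1 - lam) • y‖ :=
    and_congr_right fun h => Eq.congr_right (Eq.symm h)
  simp only [hiso, hsub, and_self]
  exact sSup_min_norm_eq_sSup_isoscelesOrthogonal hX lam (1 - lam)

/-- In a two-dimensional real Banach space, for `λ ∈ (0,1)` the generalized James
constant `J(λ, X)` equals the supremum of `‖λx + (1-λ)y‖` (equivalently of `‖λx - (1-λ)y‖`)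
over unit vectors `x, y` with `x` isosceles orthogonal to `((1-λ)/λ) • y`. -/
theorem stmt1 {X : Type*} [NormedAddCommGroup X] [NormedSpace ℝ X] [CompleteSpace X]
    (hdim : Module.finrank ℝ X = 2)
    (lam : ℝ) (hlam : lam ∈ Set.Ioo (0 : ℝ) 1) :
    sSup {r : ℝ | ∃ x y : X, ‖x‖ = 1 ∧ ‖y‖ = 1 ∧
        r = min ‖lam • x + (1 - lam) • y‖ ‖lam • x - (1 - lam) • y‖}
      = sSup {r : ℝ | ∃ x y : X, ‖x‖ = 1 ∧ ‖y‖ = 1 ∧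
          ‖x + ((1 - lam) / lam) • y‖ = ‖x - ((1 - lam) / lam) • y‖ ∧
          r = ‖lam • x + (1 - lam) • y‖} ∧
    sSup {r : ℝ | ∃ x y : X, ‖x‖ = 1 ∧ ‖y‖ = 1 ∧
        r = min ‖lam • x + (1 - lam) • y‖ ‖lam • x - (1 - lam) • y‖}
      = sSup {r : ℝ | ∃ x y : X, ‖x‖ = 1 ∧ ‖y‖ = 1 ∧
          ‖x + ((1 - lam) / lam) • y‖ = ‖x - ((1 - lam) / lam) • y‖ ∧
          r = ‖lam • x - (1 - lam) • y‖} := by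
  exact stmt1_general (Module.lt_rank_of_lt_finrank (by rw [hdim]; norm_num)) hlam.1.ne'
end

section
/- Let X be a real normed space. Then the Schäffer constant satisfies S(X) = inf{ε ∈ [0,2] : ε > 2 − 2ρ_X(ε)}, where ρ_X is the modulus of smoothness of X. -/
/-!
The inequality `2 - 2 * ρ(ε) < ε` reads `1 - ε / 2 < ρ(ε)`. As `ρ(ε)` is a supremum, this means
that some unit vectors `x`, `y` satisfy `‖x - y‖ ≤ ε` and `‖x + y‖ < ε`. Apart from the strictness
of one inequality, this says that `ε` is at least one of the values `max ‖x + y‖ ‖x - y‖`, whose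
infimum is the Schäffer constant. The restriction `ε ≤ 2` is harmless because the pair `x`, `-x`
always makes `ε = 2` admissible.
-/

section SeminormedAddGroup

variable {X : Type*} [SeminormedAddGroup X] {x y : X} {ε : ℝ}

variable (X) in
/-- The Schäffer constant `S(X)`, the smallest possible size of the longer diagonal of a
parallelogram spanned by two unit vectors. It is `0` if there are no unit vectors. -/
noncomputable def schafferConstant : ℝ :=
  sInf {r : ℝ | ∃ x y : X, ‖x‖ = 1 ∧ ‖y‖ = 1 ∧ r = max ‖x + y‖ ‖x - y‖}

variable (X) in
/-- The modulus of smoothness `ρ_X(ε)`, in the form which measures how far the midpoint of two unit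
vectors at distance at most `ε` can lie below the unit sphere; it is not the Day–Lindenstrauss
modulus `sup {(‖x + τ y‖ + ‖x - τ y‖) / 2 - 1}`. It is `0` if there is no such pair. -/
noncomputable def modulusOfSmoothness (ε : ℝ) : ℝ :=
  sSup {r : ℝ | ∃ x y : X, ‖x‖ = 1 ∧ ‖y‖ = 1 ∧ ‖x - y‖ ≤ ε ∧ r = 1 - ‖x + y‖ / 2}

theorem schafferConstant_le_max (hx : ‖x‖ = 1) (hy : ‖y‖ = 1) :
    schafferConstant X ≤ max ‖x + y‖ ‖x - y‖ := by
  refine csInf_le ⟨0, ?_⟩ ⟨x, y, hx, hy, rfl⟩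
  rintro _ ⟨u, v, -, -, rfl⟩
  exact le_max_of_le_left (norm_nonneg _)

theorem exists_max_lt_of_schafferConstant_lt (hX : ∃ x : X, ‖x‖ = 1)
    (h : schafferConstant X < ε) :
    ∃ x y : X, ‖x‖ = 1 ∧ ‖y‖ = 1 ∧ max ‖x + y‖ ‖x - y‖ < ε := by
  obtain ⟨x₀, hx₀⟩ := hX
  have nonempty : {r : ℝ | ∃ x y : X, ‖x‖ = 1 ∧ ‖y‖ = 1 ∧ r = max ‖x + y‖ ‖x - y‖}.Nonempty :=
    ⟨_, x₀, x₀, hx₀, hx₀, rfl⟩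
  obtain ⟨_, ⟨x, y, hx, hy, rfl⟩, hlt⟩ := exists_lt_of_csInf_lt nonempty h
  exact ⟨x, y, hx, hy, hlt⟩

theorem one_sub_norm_add_div_two_le_modulusOfSmoothness (hx : ‖x‖ = 1) (hy : ‖y‖ = 1)
    (hxy : ‖x - y‖ ≤ ε) : 1 - ‖x + y‖ / 2 ≤ modulusOfSmoothness X ε := by
  refine le_csSup ⟨1, ?_⟩ ⟨x, y, hx, hy, hxy, rfl⟩
  rintro _ ⟨u, v, -, -, -, rfl⟩
  linarith [norm_nonneg (u + v)]

theorem modulusOfSmoothness_le {c : ℝ} (hc : 0 ≤ c)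
    (h : ∀ x y : X, ‖x‖ = 1 → ‖y‖ = 1 → ‖x - y‖ ≤ ε → 1 - ‖x + y‖ / 2 ≤ c) :
    modulusOfSmoothness X ε ≤ c := by
  refine Real.sSup_le ?_ hc
  rintro _ ⟨x, y, hx, hy, hxy, rfl⟩
  exact h x y hx hy hxy

theorem two_sub_two_mul_modulusOfSmoothness_lt_iff (hε : ε ≤ 2) :
    2 - 2 * modulusOfSmoothness X ε < ε ↔
      ∃ x y : X, ‖x‖ = 1 ∧ ‖y‖ = 1 ∧ ‖x - y‖ ≤ ε ∧ ‖x + y‖ < ε := by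
  constructor
  · contrapose!
    intro h
    have hρ : modulusOfSmoothness X ε ≤ 1 - ε / 2 :=
      modulusOfSmoothness_le (by linarith) fun x y hx hy hxy ↦ by linarith [h x y hx hy hxy]
    linarith
  · rintro ⟨x, y, hx, hy, hsub, hadd⟩
    linarith [one_sub_norm_add_div_two_le_modulusOfSmoothness hx hy hsub]

theorem two_sub_two_mul_modulusOfSmoothness_two_lt (hX : ∃ x : X, ‖x‖ = 1) :
    2 - 2 * modulusOfSmoothness X 2 < 2 := by
  obtain ⟨x, hx⟩ := hX
  have hneg : ‖-x‖ = 1 := (norm_neg x).trans hx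
  have hsub : ‖x - -x‖ ≤ 2 := by linarith [norm_sub_le x (-x)]
  exact (two_sub_two_mul_modulusOfSmoothness_lt_iff le_rfl).2
    ⟨x, -x, hx, hneg, hsub, by simp⟩

theorem schafferConstant_le_of_two_sub_two_mul_modulusOfSmoothness_lt (hε : ε ≤ 2)
    (h : 2 - 2 * modulusOfSmoothness X ε < ε) : schafferConstant X ≤ ε := by
  obtain ⟨x, y, hx, hy, hsub, hadd⟩ := (two_sub_two_mul_modulusOfSmoothness_lt_iff hε).1 h
  exact (schafferConstant_le_max hx hy).trans (max_le hadd.le hsub)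

theorem mem_Icc_and_two_sub_two_mul_modulusOfSmoothness_lt (hX : ∃ x : X, ‖x‖ = 1)
    (hε : ε ≤ 2) (h : schafferConstant X < ε) :
    ε ∈ Set.Icc 0 2 ∧ 2 - 2 * modulusOfSmoothness X ε < ε := by
  obtain ⟨x, y, hx, hy, hmax⟩ := exists_max_lt_of_schafferConstant_lt hX h
  obtain ⟨hadd, hsub⟩ := max_lt_iff.1 hmax
  exact ⟨⟨(norm_nonneg _).trans hsub.le, hε⟩,
    (two_sub_two_mul_modulusOfSmoothness_lt_iff hε).2 ⟨x, y, hx, hy, hsub.le, hadd⟩⟩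

variable (X) in
theorem stmt7_general :
    schafferConstant X =
      sInf {ε : ℝ | ε ∈ Set.Icc (0 : ℝ) 2 ∧ ε > 2 - 2 * modulusOfSmoothness X ε} := by
  by_cases hX : ∃ x : X, ‖x‖ = 1
  · have two_mem : (2 : ℝ) ∈ Set.Icc (0 : ℝ) 2 ∧ 2 - 2 * modulusOfSmoothness X 2 < 2 :=
      ⟨Set.right_mem_Icc.2 zero_le_two, two_sub_two_mul_modulusOfSmoothness_two_lt hX⟩
    apply le_antisymm
    · exact le_csInf ⟨2, two_mem⟩ fun ε hε ↦
        schafferConstant_le_of_two_sub_two_mul_modulusOfSmoothness_lt hε.1.2 hε.2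
    · refine le_of_forall_gt_imp_ge_of_dense fun ε hε ↦ ?_
      have bddBelow : BddBelow {ε : ℝ | ε ∈ Set.Icc (0 : ℝ) 2 ∧
          ε > 2 - 2 * modulusOfSmoothness X ε} := ⟨0, fun δ hδ ↦ hδ.1.1⟩
      rcases le_total ε 2 with hε₂ | hε₂
      · exact csInf_le bddBelow (mem_Icc_and_two_sub_two_mul_modulusOfSmoothness_lt hX hε₂ hε)
      · exact (csInf_le bddBelow two_mem).trans hε₂
  · -- Without unit vectors both infima are taken over the empty set.
    unfold schafferConstant
    congr 1
    ext ε
    refine iff_of_false (fun ⟨x, _, hx, _⟩ ↦ hX ⟨x, hx⟩) fun ⟨hε, hlt⟩ ↦ ?_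
    obtain ⟨x, _, hx, _⟩ := (two_sub_two_mul_modulusOfSmoothness_lt_iff hε.2).1 hlt
    exact hX ⟨x, hx⟩

end SeminormedAddGroup

/-- In a real normed space, the Schäffer constant satisfies
`S(X) = inf {ε ∈ [0,2] : ε > 2 - 2 ρ_X(ε)}`, where `ρ_X` is the modulus of smoothness
`ρ_X(ε) = sup {1 - ‖x+y‖/2 : x, y ∈ S_X, ‖x-y‖ ≤ ε}`. -/
theorem stmt7 {X : Type*} [NormedAddCommGroup X] [NormedSpace ℝ X] :
    sInf {r : ℝ | ∃ x y : X, ‖x‖ = 1 ∧ ‖y‖ = 1 ∧ r = max ‖x + y‖ ‖x - y‖}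
      = sInf {ε : ℝ | ε ∈ Set.Icc (0 : ℝ) 2 ∧
          ε > 2 - 2 * sSup {r : ℝ | ∃ x y : X, ‖x‖ = 1 ∧ ‖y‖ = 1 ∧ ‖x - y‖ ≤ ε ∧
            r = 1 - ‖x + y‖ / 2}} :=
  stmt7_general X
end

section
/- Let X be a two-dimensional real Banach space, let x ∈ S_X, and let ε ∈ [0, 1). Then the approximate isosceles orthogonality set A(x, ε) = {y ∈ S_X : x ⊥_I^ε y} can be written as A(x, ε) = D ∪ (−D), where D is a connected subset of S_X. -/
/-! Fix a unit vector `e` that is isosceles orthogonal to `x`; it exists because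
`y ↦ ‖x + y‖² - ‖x - y‖²` is odd and the unit sphere is connected. As `y` runs along the open half
circle through `e` from `-x / ‖x‖` to `x / ‖x‖`, the monotonicity lemma for normed planes says that
`‖x - y‖` decreases and `‖x + y‖` increases, so the difference of squares increases and `A(x, ε)`
cuts out an arc of this half circle. The opposite half circle contributes the negative of that arc,
and the end points `±x / ‖x‖`, where the difference of squares is `±4‖x‖`, are not in `A(x, ε)` when
`ε < 1`. For `ε ≥ 1` or `x = 0`, the set `A(x, ε)` is the whole sphere. -/

lemma span_pair_eq_top_of_finrank_eq_two {K V : Type*} [DivisionRing K] [AddCommGroup V]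
    [Module K V] (hdim : Module.finrank K V = 2) {x y : V} (hx : x ≠ 0)
    (hy : y ∉ Submodule.span K {x}) : Submodule.span K {x, y} = ⊤ := by
  have pair_linearIndependent : LinearIndependent K ![x, y] :=
    (LinearIndependent.pair_iff' hx).2 fun a ha ↦ hy (Submodule.mem_span_singleton.2 ⟨a, ha⟩)
  simpa [Set.pair_comm] using pair_linearIndependent.span_eq_top_of_card_eq_finrank (by simp [hdim])

section IsoscelesOrthogonality

open Metric NormedSpace Set Submodule

variable {X : Type*} [NormedAddCommGroup X]

/-- The quantity `‖x + y‖² - ‖x - y‖²`, which vanishes when `x` is isosceles orthogonal to `y`. -/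
def isoscelesDefect (x y : X) : ℝ := ‖x + y‖ ^ 2 - ‖x - y‖ ^ 2

lemma isoscelesDefect_neg_right (x y : X) : isoscelesDefect x (-y) = -isoscelesDefect x y := by
  simp only [isoscelesDefect, ← sub_eq_add_neg, sub_neg_eq_add, neg_sub]

lemma abs_isoscelesDefect_le (x y : X) : |isoscelesDefect x y| ≤ 4 * ‖x‖ * ‖y‖ := by
  have upper_bound (z : X) : isoscelesDefect x z ≤ 4 * ‖x‖ * ‖z‖ := calc
    ‖x + z‖ ^ 2 - ‖x - z‖ ^ 2 ≤ (‖x‖ + ‖z‖) ^ 2 - |‖x‖ - ‖z‖| ^ 2 := by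
      gcongr
      exacts [norm_add_le x z, abs_norm_sub_norm_le x z]
    _ = 4 * ‖x‖ * ‖z‖ := by rw [sq_abs]; ring
  refine abs_le'.2 ⟨upper_bound y, ?_⟩
  simpa only [isoscelesDefect_neg_right, norm_neg] using upper_bound (-y)

lemma continuous_isoscelesDefect (x : X) : Continuous (isoscelesDefect x) := by
  unfold isoscelesDefect
  fun_prop

/-- The set `A(x, ε)` of unit vectors `y` with `x ⊥_I^ε y`; here `x` may have any norm. -/
def approxIsoscelesSet (x : X) (ε : ℝ) : Set X :=
  {y | ‖y‖ = 1 ∧ |isoscelesDefect x y| ≤ 4 * ε * ‖x‖ * ‖y‖}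

lemma neg_mem_approxIsoscelesSet {x y : X} {ε : ℝ} :
    -y ∈ approxIsoscelesSet x ε ↔ y ∈ approxIsoscelesSet x ε := by
  simp only [approxIsoscelesSet, mem_ofPred_eq, isoscelesDefect_neg_right, norm_neg, abs_neg]

lemma approxIsoscelesSet_eq_sphere {x : X} {ε : ℝ} (h : ‖x‖ ≤ ε * ‖x‖) :
    approxIsoscelesSet x ε = sphere 0 1 := by
  ext y
  rw [mem_sphere_zero_iff_norm]
  refine ⟨And.left, fun hy ↦ ⟨hy, ?_⟩⟩
  calc |isoscelesDefect x y| ≤ 4 * ‖x‖ * ‖y‖ := abs_isoscelesDefect_le x y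
    _ ≤ 4 * ε * ‖x‖ * ‖y‖ := by rw [mul_assoc 4 ε]; gcongr

variable [NormedSpace ℝ X]

lemma isoscelesDefect_smul_self (x : X) (c : ℝ) : isoscelesDefect x (c • x) = 4 * c * ‖x‖ ^ 2 := by
  have h_add : x + c • x = (1 + c) • x := by module
  have h_sub : x - c • x = (1 - c) • x := by module
  rw [isoscelesDefect, h_add, h_sub, norm_smul, norm_smul, mul_pow, mul_pow, Real.norm_eq_abs,
    Real.norm_eq_abs, sq_abs, sq_abs]
  ring

lemma exists_norm_eq_one_and_isoscelesDefect_eq_zero (h : 1 < Module.rank ℝ X) (x : X) :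
    ∃ e : X, ‖e‖ = 1 ∧ isoscelesDefect x e = 0 := by
  have sphere_connected : IsConnected (sphere (0 : X) 1) := isConnected_sphere h 0 zero_le_one
  obtain ⟨u, hu⟩ := sphere_connected.nonempty
  have hu_neg : -u ∈ sphere (0 : X) 1 := by simpa using hu
  have zero_mem : (0 : ℝ) ∈ uIcc (isoscelesDefect x u) (isoscelesDefect x (-u)) := by
    rw [isoscelesDefect_neg_right, mem_uIcc]
    grind
  obtain ⟨e, he, he_zero⟩ :=
    (sphere_connected.isPreconnected.image _ (continuous_isoscelesDefect x).continuousOn)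
      |>.ordConnected.uIcc_subset (mem_image_of_mem _ hu) (mem_image_of_mem _ hu_neg) zero_mem
  exact ⟨e, mem_sphere_zero_iff_norm.1 he, he_zero⟩

lemma notMem_span_of_mem_approxIsoscelesSet {x y : X} {ε : ℝ} (hε : ε * ‖x‖ < ‖x‖)
    (hy : y ∈ approxIsoscelesSet x ε) : y ∉ span ℝ {x} := by
  intro hyx
  obtain ⟨c, rfl⟩ := mem_span_singleton.1 hyx
  obtain ⟨hc, h_le⟩ := hy
  rw [norm_smul, Real.norm_eq_abs] at hc
  have defect_eq : |isoscelesDefect x (c • x)| = 4 * ‖x‖ := calc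
    |isoscelesDefect x (c • x)| = 4 * (|c| * ‖x‖) * ‖x‖ := by
      rw [isoscelesDefect_smul_self, abs_mul, abs_mul, abs_sq, Nat.abs_ofNat]
      ring
    _ = 4 * ‖x‖ := by rw [hc, mul_one]
  rw [defect_eq, norm_smul, Real.norm_eq_abs, hc] at h_le
  linarith

/- The monotonicity lemma for normed planes: the hypothesis puts `a x + b y` on the circle through
`y` centred at the origin, between `y` and the direction of `x`. -/
lemma norm_sub_smul_add_smul_le {x y : X} {a b : ℝ} (ha : 0 ≤ a) (hb : 0 ≤ b)
    (h : ‖a • x + b • y‖ = ‖y‖) : ‖x - (a • x + b • y)‖ ≤ ‖x - y‖ := by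
  rcases (add_nonneg ha hb).eq_or_lt' with hab | hab
  · obtain ⟨rfl, rfl⟩ := (add_eq_zero_iff_of_nonneg ha hb).1 hab
    have hy : y = 0 := by simpa [eq_comm] using h
    simp [hy]
  set z := a • x + b • y with hz
  have excess_le : |a + b - 1| * ‖z‖ ≤ a * ‖x - y‖ := calc
    |a + b - 1| * ‖z‖ = |‖(a + b) • y‖ - ‖z‖| := by
      rw [norm_smul, Real.norm_of_nonneg hab.le, h, ← sub_one_mul, abs_mul, abs_norm]
    _ ≤ ‖(a + b) • y - z‖ := abs_norm_sub_norm_le _ _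
    _ = ‖a • (y - x)‖ := by rw [hz]; congr 1; module
    _ = a * ‖x - y‖ := by rw [norm_smul, Real.norm_of_nonneg ha, norm_sub_rev]
  refine le_of_mul_le_mul_left ?_ hab
  calc (a + b) * ‖x - z‖ = ‖(a + b) • (x - z)‖ := by rw [norm_smul, Real.norm_of_nonneg hab.le]
    _ = ‖b • (x - y) - (a + b - 1) • z‖ := by rw [hz]; congr 1; module
    _ ≤ ‖b • (x - y)‖ + ‖(a + b - 1) • z‖ := norm_sub_le _ _
    _ = b * ‖x - y‖ + |a + b - 1| * ‖z‖ := by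
      rw [norm_smul, norm_smul, Real.norm_of_nonneg hb, Real.norm_eq_abs]
    _ ≤ b * ‖x - y‖ + a * ‖x - y‖ := by gcongr
    _ = (a + b) * ‖x - y‖ := by ring

/-- A parametrization by `ℝ` of the open half of the unit circle of `span {x, e}` that lies on the
same side of the line `ℝ x` as `e`, running from the direction of `-x` to that of `x`. It is
intended for `e ∉ ℝ x`; otherwise `normalize` takes the junk value `0` at some parameter. -/
noncomputable def halfCircle (x e : X) (t : ℝ) : X := NormedSpace.normalize (t • x + e)

lemma halfCircle_neg_left (x e : X) (t : ℝ) : halfCircle (-x) e t = halfCircle x e (-t) := by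
  rw [halfCircle, halfCircle, smul_neg, neg_smul]

lemma smul_add_ne_zero_of_notMem_span {x e : X} (he : e ∉ span ℝ {x}) (t : ℝ) : t • x + e ≠ 0 :=
  fun h ↦ he <| mem_span_singleton.2 ⟨-t, by rw [neg_smul, neg_eq_of_add_eq_zero_right h]⟩

lemma norm_halfCircle {x e : X} (he : e ∉ span ℝ {x}) (t : ℝ) : ‖halfCircle x e t‖ = 1 :=
  norm_normalize (smul_add_ne_zero_of_notMem_span he t)

lemma continuous_halfCircle {x e : X} (he : e ∉ span ℝ {x}) : Continuous (halfCircle x e) := by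
  have line_continuous : Continuous fun t : ℝ ↦ t • x + e := by fun_prop
  exact (line_continuous.norm.inv₀ fun t ↦
    norm_ne_zero_iff.2 (smul_add_ne_zero_of_notMem_span he t)).smul line_continuous

lemma mem_range_halfCircle_self {x e : X} (he : ‖e‖ = 1) : e ∈ range (halfCircle x e) :=
  ⟨0, by rw [halfCircle, zero_smul, zero_add, normalize_eq_self_of_norm_eq_one he]⟩

lemma smul_add_smul_mem_range_halfCircle {x e : X} {a b : ℝ} (hb : 0 < b)
    (h : ‖a • x + b • e‖ = 1) : a • x + b • e ∈ range (halfCircle x e) := by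
  refine ⟨a / b, ?_⟩
  have h_smul : b • ((a / b) • x + e) = a • x + b • e := by
    rw [smul_add, smul_smul, mul_div_cancel₀ a hb.ne']
  rw [halfCircle, ← normalize_smul_of_pos hb, h_smul, normalize_eq_self_of_norm_eq_one h]

lemma mem_or_neg_mem_range_halfCircle {x e y : X} (hy : ‖y‖ = 1) (hy_span : y ∈ span ℝ {x, e})
    (hyx : y ∉ span ℝ {x}) : y ∈ range (halfCircle x e) ∨ -y ∈ range (halfCircle x e) := by
  obtain ⟨a, b, rfl⟩ := mem_span_pair.1 hy_span
  rcases lt_trichotomy b 0 with hb | rfl | hb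
  · have neg_eq : -(a • x + b • e) = (-a) • x + (-b) • e := by module
    rw [← norm_neg, neg_eq] at hy
    exact .inr <| neg_eq ▸ smul_add_smul_mem_range_halfCircle (neg_pos.2 hb) hy
  · exact absurd (mem_span_singleton.2 ⟨a, by rw [zero_smul, add_zero]⟩) hyx
  · exact .inl <| smul_add_smul_mem_range_halfCircle hb hy

lemma antitone_norm_sub_halfCircle {x e : X} (he : e ∉ span ℝ {x}) :
    Antitone fun t ↦ ‖x - halfCircle x e t‖ := by
  intro t s hts
  have halfCircle_eq : halfCircle x e s = (‖s • x + e‖⁻¹ * (s - t)) • x +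
      (‖s • x + e‖⁻¹ * ‖t • x + e‖) • halfCircle x e t := by
    rw [mul_smul _ ‖t • x + e‖, halfCircle, halfCircle, norm_smul_normalize, NormedSpace.normalize]
    module
  have : 0 ≤ s - t := sub_nonneg.2 hts
  beta_reduce
  rw [halfCircle_eq]
  refine norm_sub_smul_add_smul_le (by positivity) (by positivity) ?_
  rw [← halfCircle_eq, norm_halfCircle he, norm_halfCircle he]

lemma monotone_norm_add_halfCircle {x e : X} (he : e ∉ span ℝ {x}) :
    Monotone fun t ↦ ‖x + halfCircle x e t‖ := by
  have he_neg : e ∉ span ℝ {-x} := by rwa [← Set.neg_singleton, span_neg]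
  intro t s hts
  simpa only [halfCircle_neg_left, neg_neg, ← neg_add', norm_neg] using
    antitone_norm_sub_halfCircle he_neg (neg_le_neg hts)

lemma monotone_isoscelesDefect_halfCircle {x e : X} (he : e ∉ span ℝ {x}) :
    Monotone fun t ↦ isoscelesDefect x (halfCircle x e t) := by
  intro t s hts
  have h_add : ‖x + halfCircle x e t‖ ≤ ‖x + halfCircle x e s‖ :=
    monotone_norm_add_halfCircle he hts
  have h_sub : ‖x - halfCircle x e s‖ ≤ ‖x - halfCircle x e t‖ :=
    antitone_norm_sub_halfCircle he hts
  simp only [isoscelesDefect]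
  gcongr

lemma isPreconnected_approxIsoscelesSet_inter_range_halfCircle {x e : X} (he : e ∉ span ℝ {x})
    (ε : ℝ) : IsPreconnected (approxIsoscelesSet x ε ∩ range (halfCircle x e)) := by
  have preimage_eq : halfCircle x e ⁻¹' approxIsoscelesSet x ε =
      (fun t ↦ isoscelesDefect x (halfCircle x e t)) ⁻¹'
        Icc (-(4 * ε * ‖x‖)) (4 * ε * ‖x‖) := by
    ext t
    simp only [approxIsoscelesSet, mem_preimage, mem_ofPred_eq, norm_halfCircle he, true_and,
      mul_one, mem_Icc, abs_le]
  rw [← image_preimage_eq_inter_range, preimage_eq]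
  exact (ordConnected_Icc.preimage_mono (monotone_isoscelesDefect_halfCircle he)).isPreconnected
    |>.image _ (continuous_halfCircle he).continuousOn

lemma approxIsoscelesSet_eq_union_neg {x e : X} {ε : ℝ} (h_span : span ℝ {x, e} = ⊤)
    (hε : ε * ‖x‖ < ‖x‖) :
    approxIsoscelesSet x ε = approxIsoscelesSet x ε ∩ range (halfCircle x e) ∪
      -(approxIsoscelesSet x ε ∩ range (halfCircle x e)) := by
  ext y
  simp only [mem_union, mem_inter_iff, Set.mem_neg, neg_mem_approxIsoscelesSet, ← and_or_left]
  exact (and_iff_left_of_imp fun hy ↦ mem_or_neg_mem_range_halfCircle hy.1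
    (h_span ▸ mem_top) (notMem_span_of_mem_approxIsoscelesSet hε hy)).symm

end IsoscelesOrthogonality

theorem stmt17_general {X : Type*} [NormedAddCommGroup X] [NormedSpace ℝ X]
    (hdim : Module.finrank ℝ X = 2) (x : X) {ε : ℝ} (hε : 0 ≤ ε) :
    ∃ D : Set X, D ⊆ {y : X | ‖y‖ = 1} ∧ IsConnected D ∧ approxIsoscelesSet x ε = D ∪ (-D) := by
  have hrank : 1 < Module.rank ℝ X := Module.lt_rank_of_lt_finrank (by lia)
  rcases le_or_gt ‖x‖ (ε * ‖x‖) with h_le | h_lt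
  · refine ⟨Metric.sphere 0 1, fun y hy ↦ mem_sphere_zero_iff_norm.1 hy,
      isConnected_sphere hrank 0 zero_le_one, ?_⟩
    rw [approxIsoscelesSet_eq_sphere h_le, neg_sphere, neg_zero, Set.union_self]
  · obtain ⟨e, he_norm, he_zero⟩ := exists_norm_eq_one_and_isoscelesDefect_eq_zero hrank x
    have he_mem : e ∈ approxIsoscelesSet x ε :=
      ⟨he_norm, by rw [he_zero, abs_zero]; positivity⟩
    have he : e ∉ Submodule.span ℝ {x} := notMem_span_of_mem_approxIsoscelesSet h_lt he_mem
    have hx : x ≠ 0 := by rintro rfl; simp at h_lt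
    exact ⟨approxIsoscelesSet x ε ∩ Set.range (halfCircle x e), fun y hy ↦ hy.1.1,
      ⟨⟨e, he_mem, mem_range_halfCircle_self he_norm⟩,
        isPreconnected_approxIsoscelesSet_inter_range_halfCircle he ε⟩,
      approxIsoscelesSet_eq_union_neg (span_pair_eq_top_of_finrank_eq_two hdim hx he) h_lt⟩

/-- In a two-dimensional real Banach space, for a unit vector `x` and
`ε ∈ [0, 1)`, the approximate isosceles orthogonality set
`A(x, ε) = {y ∈ S_X : |‖x+y‖² - ‖x-y‖²| ≤ 4 ε ‖x‖ ‖y‖}` is of the form `D ∪ (-D)` for some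
connected subset `D` of the unit sphere. -/
theorem stmt17 {X : Type*} [NormedAddCommGroup X] [NormedSpace ℝ X] [CompleteSpace X]
    (hdim : Module.finrank ℝ X = 2)
    (x : X) (hx : ‖x‖ = 1) (ε : ℝ) (hε : ε ∈ Set.Ico (0 : ℝ) 1) :
    ∃ D : Set X, D ⊆ {y : X | ‖y‖ = 1} ∧ IsConnected D ∧
      {y : X | ‖y‖ = 1 ∧ |‖x + y‖ ^ 2 - ‖x - y‖ ^ 2| ≤ 4 * ε * ‖x‖ * ‖y‖} = D ∪ (-D) :=
  stmt17_general hdim x hε.1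
end
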